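/- arXiv:2204.08184 — 2 statements merged into one kernel-verified Lean document; each statement's English description precedes it below -/
import Mathlib

section
/- Let G be a connected simple graph and let 𝕊 be a nonempty family of spanning trees of G that is path covering, meaning that for every path p in G there exists some tree S in 𝕊 such that every edge of p is an edge of S. Then for all vertices u and v, the minimum over S in 𝕊 of the distance d_S(u,v) equals the distance d_G(u,v). -/
section

variable {V : Type*} {G : SimpleGraph V} {u v : V} {p : G.Walk u v}

theorem dist_eq_of_le_of_shortest_walk_edges_mem {H : SimpleGraph V} (hle : H ≤ G)
    (hp : p.length = G.dist u v) (hedges : ∀ e ∈ p.edges, e ∈ H.edgeSet) :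
    H.dist u v = G.dist u v := by
  apply le_antisymm
  · calc
      H.dist u v ≤ (p.transfer H hedges).length := SimpleGraph.dist_le _
      _ = p.length := p.length_transfer hedges
      _ = G.dist u v := hp
  · exact (p.transfer H hedges).reachable.dist_anti hle

theorem path_covering_trees_dist_general {𝕊 : Set (SimpleGraph V)} (hle : ∀ S ∈ 𝕊, S ≤ G)
    (hreach : ∀ S ∈ 𝕊, S.Reachable u v) (hp : p.length = G.dist u v)
    (hcov : ∃ S ∈ 𝕊, ∀ e ∈ p.edges, e ∈ S.edgeSet) :
    IsLeast ((fun S : SimpleGraph V => S.dist u v) '' 𝕊) (G.dist u v) := by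
  constructor
  · obtain ⟨S, hS, hedges⟩ := hcov
    exact ⟨S, hS, dist_eq_of_le_of_shortest_walk_edges_mem (hle S hS) hp hedges⟩
  · rintro _ ⟨S, hS, rfl⟩
    exact (hreach S hS).dist_anti (hle S hS)

end

/-- Let `G` be a connected simple graph on a finite vertex type and
`𝕊` a nonempty family of spanning trees of `G` that is path covering: for every path
`p` in `G` there is some `S ∈ 𝕊` containing every edge of `p`. Then for all vertices
`u`, `v`, the minimum over `S ∈ 𝕊` of the distance `d_S(u, v)` equals `d_G(u, v)`. -/
theorem path_covering_trees_dist {V : Type*} [Fintype V] (G : SimpleGraph V)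
    (hG : G.Connected) (𝕊 : Set (SimpleGraph V)) (hne : 𝕊.Nonempty)
    (htree : ∀ S ∈ 𝕊, S ≤ G ∧ S.IsTree)
    (hcov : ∀ (u v : V) (p : G.Walk u v), p.IsPath →
      ∃ S ∈ 𝕊, ∀ e ∈ p.edges, e ∈ S.edgeSet)
    (u v : V) :
    sInf ((fun S : SimpleGraph V => S.dist u v) '' 𝕊) = G.dist u v := by
  obtain ⟨p, hpath, hlength⟩ := hG.exists_path_of_dist u v
  exact (path_covering_trees_dist_general (fun S hS => (htree S hS).1)
    (fun S hS => (htree S hS).2.connected u v) hlength (hcov u v p hpath)).csInf_eq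
end

section
/- For every n ≥ 1, the subgroup of the symmetric group on Fin n generated by the set of prefix reversals {r_i : 2 ≤ i ≤ n} is the whole symmetric group, i.e. every permutation of Fin n is a product of prefix reversals. -/
/-- The underlying function of the prefix reversal `r_i` on `Fin n`:
it sends `j` to `i - 1 - j` for `j < i` and fixes `j` for `j ≥ i`. -/
def pancakeRevFun (n i : ℕ) (j : Fin n) : Fin n :=
  if h : j.val < i ∧ i ≤ n then ⟨i - 1 - j.val, by omega⟩ else j

lemma pancakeRevFun_involutive (n i : ℕ) :
    Function.Involutive (pancakeRevFun n i) := by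
  intro j
  unfold pancakeRevFun
  by_cases h : j.val < i ∧ i ≤ n
  · rw [dif_pos h, dif_pos (by constructor <;> [dsimp; skip] <;> omega)]
    ext
    dsimp
    omega
  · rw [dif_neg h, dif_neg h]

/-- The prefix reversal `r_i` as a permutation of `Fin n`. -/
def pancakeRev (n i : ℕ) : Equiv.Perm (Fin n) :=
  Function.Involutive.toPerm _ (pancakeRevFun_involutive n i)

lemma pancakeRev_mul_self (n i : ℕ) : pancakeRev n i * pancakeRev n i = 1 :=
  Equiv.ext fun j => pancakeRevFun_involutive n i j

/-- The pancake graph `P_n`: vertices are the permutations of `Fin n`, and `π` is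
adjacent to `σ` iff `σ = π ∘ r_i` for some prefix reversal `r_i` with `2 ≤ i ≤ n`. -/
def pancakeGraph (n : ℕ) : SimpleGraph (Equiv.Perm (Fin n)) where
  Adj π σ := ∃ i, 2 ≤ i ∧ i ≤ n ∧ σ = π * pancakeRev n i
  symm := by
    refine ⟨?_⟩
    rintro π σ ⟨i, h2, hn, rfl⟩
    exact ⟨i, h2, hn, by rw [mul_assoc, pancakeRev_mul_self, mul_one]⟩
  loopless := by
    refine ⟨?_⟩
    rintro π ⟨i, h2, hn, hπ⟩
    have hr : (1 : Equiv.Perm (Fin n)) = pancakeRev n i :=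
      mul_left_cancel (a := π) (by rw [mul_one]; exact hπ)
    have hn1 : 0 < n := by omega
    have h1 : pancakeRevFun n i ⟨0, hn1⟩ = ⟨0, hn1⟩ := by
      show pancakeRev n i ⟨0, hn1⟩ = ⟨0, hn1⟩
      rw [← hr]; rfl
    rw [pancakeRevFun,
      dif_pos ⟨show (0:ℕ) < i by omega, hn⟩] at h1
    have := congrArg Fin.val h1
    simp at this
    omega

/-!
Conjugating `r_2`, the transposition of the first two positions, by `r_{k+2}` gives the
transposition of the positions `k` and `k + 1`; such adjacent transpositions generate the
symmetric group.
-/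

section PrefixReversal

variable {n : ℕ}

lemma pancakeRev_apply_of_lt {i : ℕ} {j : Fin n} (hj : j < i) (hi : i ≤ n) :
    pancakeRev n i j = ⟨i - 1 - j, by omega⟩ :=
  dif_pos ⟨hj, hi⟩

lemma pancakeRev_apply_of_le {i : ℕ} {j : Fin n} (hj : i ≤ j) : pancakeRev n i j = j :=
  dif_neg fun h => hj.not_gt h.1

lemma pancakeRev_two (hn : 2 ≤ n) :
    pancakeRev n 2 = Equiv.swap ⟨0, by omega⟩ ⟨1, by omega⟩ := by
  refine Equiv.ext fun ⟨j, _⟩ => ?_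
  match j with
  | 0 => exact (pancakeRev_apply_of_lt Nat.zero_lt_two hn).trans (Equiv.swap_apply_left _ _).symm
  | 1 => exact (pancakeRev_apply_of_lt Nat.one_lt_two hn).trans (Equiv.swap_apply_right _ _).symm
  | j + 2 =>
    rw [pancakeRev_apply_of_le (Nat.le_add_left 2 j),
      Equiv.swap_apply_of_ne_of_ne (by simp) (by simp)]

lemma pancakeRev_conj_pancakeRev_two {k : ℕ} (hk : k + 2 ≤ n) :
    pancakeRev n (k + 2) * pancakeRev n 2 * (pancakeRev n (k + 2))⁻¹ =
      Equiv.swap ⟨k, by omega⟩ ⟨k + 1, by omega⟩ := by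
  have map_zero : pancakeRev n (k + 2) ⟨0, by omega⟩ = ⟨k + 1, by omega⟩ :=
    pancakeRev_apply_of_lt (by simp) hk
  have map_one : pancakeRev n (k + 2) ⟨1, by omega⟩ = ⟨k, by omega⟩ :=
    pancakeRev_apply_of_lt (by simp) hk
  rw [pancakeRev_two (by omega), ← Equiv.swap_apply_apply, map_zero, map_one, Equiv.swap_comm]

lemma pancakeRev_mem_closure {i : ℕ} (hi : 2 ≤ i) (hin : i ≤ n) :
    pancakeRev n i ∈
      Subgroup.closure {r : Equiv.Perm (Fin n) | ∃ i, 2 ≤ i ∧ i ≤ n ∧ r = pancakeRev n i} :=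
  Subgroup.subset_closure ⟨i, hi, hin, rfl⟩

lemma swap_mem_closure_pancakeRev {k : ℕ} (hk : k + 2 ≤ n) :
    Equiv.swap ⟨k, by omega⟩ ⟨k + 1, by omega⟩ ∈
      Subgroup.closure {r : Equiv.Perm (Fin n) | ∃ i, 2 ≤ i ∧ i ≤ n ∧ r = pancakeRev n i} := by
  have rev_mem := pancakeRev_mem_closure (Nat.le_add_left 2 k) hk
  have rev_two_mem := pancakeRev_mem_closure le_rfl (le_of_add_le_right hk)
  rw [← pancakeRev_conj_pancakeRev_two hk]
  exact mul_mem (mul_mem rev_mem rev_two_mem) (inv_mem rev_mem)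

end PrefixReversal

/-- For every `n ≥ 1`, the subgroup of the symmetric group on `Fin n`
generated by the prefix reversals `{r_i : 2 ≤ i ≤ n}` is the whole symmetric group,
i.e. every permutation of `Fin n` is a product of prefix reversals. -/
theorem pancake_reversals_generate (n : ℕ) (hn : 1 ≤ n) :
    Subgroup.closure {r : Equiv.Perm (Fin n) | ∃ i, 2 ≤ i ∧ i ≤ n ∧ r = pancakeRev n i}
      = ⊤ := by
  obtain ⟨m, rfl⟩ := Nat.exists_eq_add_of_le' hn
  have adjacent_swaps_generate :
      Subgroup.closure (Set.range fun k : Fin m => Equiv.swap k.castSucc k.succ) = ⊤ :=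
    Subgroup.closure_eq_top_of_mclosure_eq_top (Equiv.Perm.mclosure_swap_castSucc_succ m)
  rw [eq_top_iff, ← adjacent_swaps_generate, Subgroup.closure_le]
  rintro _ ⟨k, rfl⟩
  exact swap_mem_closure_pancakeRev (Nat.succ_le_succ k.isLt)
end
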